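/- Let φ : ℝⁿ → ℝⁿ be an L-bi-Lipschitz bijection and let U ⊆ ℝⁿ be a set of finite perimeter. Then φ(U) is a set of finite perimeter; moreover Lⁿ(φ(U)) ≤ Lⁿ · Lⁿ(U) (the first Lⁿ a power of L, the others Lebesgue measure) and H^{n−1}(∂*(φ(U))) ≤ L^{n−1} · H^{n−1}(∂*U). -/

import Mathlib

/-!
A `K`-Lipschitz map `φ` of `ℝⁿ` increases Lebesgue measure by a factor of at most `Kⁿ`, because
Lebesgue measure is a multiple of the `n`-dimensional Hausdorff measure. If moreover `φ` contracts
distances by a factor of at most `K'`, then `φ(U) ∩ B(φ x, r) ⊆ φ(U ∩ B(x, K' r))`, so the density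
quotient of `φ(U)` at `φ x` and radius `r` is at most `(K K')ⁿ` times that of `U` at `x` and radius
`K' r`. Hence `φ` preserves points of density `0` and, if it is onto and so commutes with
complements, also points of density `1`. Therefore `∂*(φ(U)) ⊆ φ(∂*U)`, to which the Lipschitz bound
for `H^{n-1}` applies.
-/

open MeasureTheory Metric Set Filter Topology
open scoped ENNReal

/-- The set `U` has density `d` at the point `x`:  the ratio
`Lⁿ(U ∩ B(x,r)) / Lⁿ(B(x,r))` tends to `d` as `r → 0⁺`. -/
def HasDensity {n : ℕ} (U : Set (EuclideanSpace ℝ (Fin n)))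
    (x : EuclideanSpace ℝ (Fin n)) (d : ℝ≥0∞) : Prop :=
  Tendsto (fun r : ℝ => volume (U ∩ ball x r) / volume (ball x r)) (𝓝[>] 0) (𝓝 d)

/-- The essential (measure-theoretic) boundary of `U`: the set of points `x` where the
density of `U` neither (exists and equals `0`) nor (exists and equals `1`). -/
def essentialBoundary {n : ℕ} (U : Set (EuclideanSpace ℝ (Fin n))) :
    Set (EuclideanSpace ℝ (Fin n)) :=
  {x | ¬ HasDensity U x 0 ∧ ¬ HasDensity U x 1}

/-- A Borel set `U ⊆ ℝⁿ` has finite perimeter if it has finite Lebesgue measure and its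
essential boundary has finite `(n−1)`-dimensional Hausdorff measure. -/
def HasFinitePerimeter {n : ℕ} (U : Set (EuclideanSpace ℝ (Fin n))) : Prop :=
  MeasurableSet U ∧ volume U < ⊤ ∧ μH[(n : ℝ) - 1] (essentialBoundary U) < ⊤

open Module (finrank)
open scoped NNReal

theorem addHaar_image_le_of_lipschitzWith {E : Type*} [NormedAddCommGroup E] [NormedSpace ℝ E]
    [FiniteDimensional ℝ E] [MeasurableSpace E] [BorelSpace E] (μ : Measure E)
    [μ.IsAddHaarMeasure] {K : ℝ≥0} {f : E → E} (hf : LipschitzWith K f) (s : Set E) :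
    μ (f '' s) ≤ (K : ℝ≥0∞) ^ finrank ℝ E * μ s := by
  have hμ := Measure.isAddLeftInvariant_eq_smul μ μH[finrank ℝ E]
  have hH := hf.hausdorffMeasure_image_le (Nat.cast_nonneg (finrank ℝ E)) s
  rw [ENNReal.rpow_natCast] at hH
  rw [hμ, Measure.smul_apply, Measure.smul_apply, mul_smul_comm]
  gcongr

theorem lipschitzWith_and_antilipschitzWith_of_norm_sub {E F : Type*} [SeminormedAddCommGroup E]
    [SeminormedAddCommGroup F] {L : ℝ≥0} (hL : 0 < L) {f : E → F}
    (hf : ∀ x y, (1 / (L : ℝ)) * ‖x - y‖ ≤ ‖f x - f y‖ ∧ ‖f x - f y‖ ≤ L * ‖x - y‖) :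
    LipschitzWith L f ∧ AntilipschitzWith L f := by
  refine ⟨LipschitzWith.of_dist_le_mul fun x y => ?_,
    AntilipschitzWith.of_le_mul_dist fun x y => ?_⟩
  · simpa only [dist_eq_norm] using (hf x y).2
  · simpa only [dist_eq_norm, one_div, inv_mul_le_iff₀ (NNReal.coe_pos.2 hL)] using (hf x y).1

theorem image_inter_ball_subset_of_antilipschitzWith {X Y : Type*} [PseudoMetricSpace X]
    [PseudoMetricSpace Y] {K : ℝ≥0} (hK : 0 < K) {f : X → Y} (hf : AntilipschitzWith K f)
    (s : Set X) (x : X) (r : ℝ) :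
    f '' s ∩ ball (f x) r ⊆ f '' (s ∩ ball x (K * r)) := by
  rintro _ ⟨⟨y, hys, rfl⟩, hyr⟩
  have hy : dist y x < K * r :=
    (hf.le_mul_dist y x).trans_lt (mul_lt_mul_of_pos_left hyr (NNReal.coe_pos.2 hK))
  exact ⟨y, ⟨hys, hy⟩, rfl⟩

section

variable {n : ℕ} {U : Set (EuclideanSpace ℝ (Fin n))} {x : EuclideanSpace ℝ (Fin n)}

theorem HasDensity.compl {d : ℝ≥0∞} (hU : NullMeasurableSet U) (h : HasDensity U x d) :
    HasDensity Uᶜ x (1 - d) := by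
  have hlim := ENNReal.Tendsto.sub (tendsto_const_nhds (x := (1 : ℝ≥0∞))) h
    (Or.inl ENNReal.one_ne_top)
  refine hlim.congr' ?_
  filter_upwards [self_mem_nhdsWithin] with r hr
  have hsum : volume (Uᶜ ∩ ball x r) / volume (ball x r) +
      volume (U ∩ ball x r) / volume (ball x r) = 1 := by
    rw [← ENNReal.add_div, inter_comm U, inter_comm Uᶜ, ← sdiff_eq, add_comm,
      measure_inter_add_sdiff₀ _ hU]
    exact ENNReal.div_self (measure_ball_pos _ _ hr).ne' measure_ball_lt_top.ne
  exact ENNReal.sub_eq_of_eq_add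
    (ne_top_of_le_ne_top ENNReal.one_ne_top (hsum ▸ le_add_self)) hsum.symm

theorem hasDensity_compl_zero_iff (hU : NullMeasurableSet U) :
    HasDensity Uᶜ x 0 ↔ HasDensity U x 1 :=
  ⟨fun h => by simpa only [compl_compl, tsub_zero] using h.compl hU.compl,
    fun h => by simpa only [tsub_self] using h.compl hU⟩

theorem hasDensity_empty (x : EuclideanSpace ℝ (Fin n)) : HasDensity ∅ x 0 := by
  simp [HasDensity]

theorem hasDensity_univ (x : EuclideanSpace ℝ (Fin n)) : HasDensity univ x 1 := by
  simpa only [compl_empty, tsub_zero] using (hasDensity_empty x).compl nullMeasurableSet_empty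

theorem essentialBoundary_eq_empty_of_dim_zero (U : Set (EuclideanSpace ℝ (Fin 0))) :
    essentialBoundary U = ∅ := by
  refine eq_empty_of_forall_notMem fun x hx => ?_
  obtain rfl | hU := U.eq_empty_or_nonempty
  · exact hx.1 (hasDensity_empty x)
  · rw [Subsingleton.eq_univ_of_nonempty hU] at hx
    exact hx.2 (hasDensity_univ x)

variable {K K' : ℝ≥0} {φ : EuclideanSpace ℝ (Fin n) → EuclideanSpace ℝ (Fin n)}

theorem volume_image_le_of_lipschitzWith (hφ : LipschitzWith K φ)
    (s : Set (EuclideanSpace ℝ (Fin n))) :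
    volume (φ '' s) ≤ (K : ℝ≥0∞) ^ n * volume s := by
  simpa only [finrank_euclideanSpace_fin] using addHaar_image_le_of_lipschitzWith volume hφ s

theorem volume_image_inter_ball_div_le (hK' : 0 < K') (hφ : LipschitzWith K φ)
    (hφ' : AntilipschitzWith K' φ) (U : Set (EuclideanSpace ℝ (Fin n)))
    (x : EuclideanSpace ℝ (Fin n)) (r : ℝ) :
    volume (φ '' U ∩ ball (φ x) r) / volume (ball (φ x) r) ≤
      ((K * K' : ℝ≥0) : ℝ≥0∞) ^ n *
        (volume (U ∩ ball x (K' * r)) / volume (ball x (K' * r))) := by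
  have hball : volume (ball x (K' * r)) = (K' : ℝ≥0∞) ^ n * volume (ball (φ x) r) := by
    rw [Measure.addHaar_ball_mul_of_pos _ _ (NNReal.coe_pos.2 hK'), finrank_euclideanSpace_fin,
      Measure.addHaar_ball_center volume (φ x), ENNReal.ofReal_pow K'.coe_nonneg,
      ENNReal.ofReal_coe_nnreal]
  have hK'0 : (K' : ℝ≥0∞) ^ n ≠ 0 := pow_ne_zero n (ENNReal.coe_ne_zero.2 hK'.ne')
  have hK'top : (K' : ℝ≥0∞) ^ n ≠ ⊤ := ENNReal.pow_ne_top ENNReal.coe_ne_top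
  calc volume (φ '' U ∩ ball (φ x) r) / volume (ball (φ x) r)
      ≤ volume (φ '' (U ∩ ball x (K' * r))) / volume (ball (φ x) r) := by
        gcongr
        exact image_inter_ball_subset_of_antilipschitzWith hK' hφ' U x r
    _ ≤ (K : ℝ≥0∞) ^ n * volume (U ∩ ball x (K' * r)) / volume (ball (φ x) r) := by
        gcongr
        exact volume_image_le_of_lipschitzWith hφ _
    _ = ((K * K' : ℝ≥0) : ℝ≥0∞) ^ n *
          (volume (U ∩ ball x (K' * r)) / volume (ball x (K' * r))) := by
        rw [hball, ENNReal.coe_mul, mul_pow, mul_assoc, ← mul_div_assoc ((K' : ℝ≥0∞) ^ n),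
          ENNReal.mul_div_mul_left _ _ hK'0 hK'top, mul_div_assoc]

theorem HasDensity.image_zero (hK' : 0 < K') (hφ : LipschitzWith K φ)
    (hφ' : AntilipschitzWith K' φ) (h : HasDensity U x 0) : HasDensity (φ '' U) (φ x) 0 := by
  have hscale : Tendsto (fun r : ℝ => K' * r) (𝓝[>] 0) (𝓝[>] 0) := by
    simpa only [comap_mulLeft_nhdsGT_zero (NNReal.coe_pos.2 hK')] using
      tendsto_comap (f := fun r : ℝ => K' * r) (x := 𝓝[>] 0)
  have hlim := ENNReal.Tendsto.const_mul (a := ((K * K' : ℝ≥0) : ℝ≥0∞) ^ n) (h.comp hscale)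
    (Or.inr (ENNReal.pow_ne_top ENNReal.coe_ne_top))
  rw [mul_zero] at hlim
  exact tendsto_of_tendsto_of_tendsto_of_le_of_le tendsto_const_nhds hlim (fun _ => zero_le)
    (volume_image_inter_ball_div_le hK' hφ hφ' U x)

theorem essentialBoundary_image_subset (hK' : 0 < K') (hφ : LipschitzWith K φ)
    (hφ' : AntilipschitzWith K' φ) (hsurj : Function.Surjective φ) (hU : MeasurableSet U) :
    essentialBoundary (φ '' U) ⊆ φ '' essentialBoundary U := by
  intro y hy
  obtain ⟨x, rfl⟩ := hsurj y
  refine ⟨x, ⟨fun h0 => hy.1 (h0.image_zero hK' hφ hφ'), fun h1 => hy.2 ?_⟩, rfl⟩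
  have himage : MeasurableSet (φ '' U) :=
    hU.image_of_continuousOn_injOn hφ.continuous.continuousOn hφ'.injective.injOn
  rw [← hasDensity_compl_zero_iff himage.nullMeasurableSet,
    ← image_compl_eq ⟨hφ'.injective, hsurj⟩]
  exact ((hasDensity_compl_zero_iff hU.nullMeasurableSet).2 h1).image_zero hK' hφ hφ'

theorem hausdorffMeasure_essentialBoundary_image_le (hφ : LipschitzWith K φ)
    (hφ' : AntilipschitzWith K' φ) (hsurj : Function.Surjective φ) (hU : MeasurableSet U) :
    μH[(n : ℝ) - 1] (essentialBoundary (φ '' U)) ≤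
      (K : ℝ≥0∞) ^ (n - 1) * μH[(n : ℝ) - 1] (essentialBoundary U) := by
  -- For `n = 0` the dimension `n - 1` is negative and the Lipschitz bound is not available.
  obtain rfl | hn := Nat.eq_zero_or_pos n
  · simp only [essentialBoundary_eq_empty_of_dim_zero, measure_empty, zero_le]
  have : Nonempty (Fin n) := ⟨⟨0, hn⟩⟩
  rw [← Nat.cast_pred hn, ← ENNReal.rpow_natCast]
  exact (measure_mono (essentialBoundary_image_subset hφ'.pos hφ hφ' hsurj hU)).trans
    (hφ.hausdorffMeasure_image_le (Nat.cast_nonneg _) _)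

theorem finitePerimeter_image_biLipschitz_general (hφ : LipschitzWith K φ)
    (hφ' : AntilipschitzWith K' φ) (hsurj : Function.Surjective φ) (hU : HasFinitePerimeter U) :
    HasFinitePerimeter (φ '' U) ∧
    volume (φ '' U) ≤ (K : ℝ≥0∞) ^ n * volume U ∧
    μH[(n : ℝ) - 1] (essentialBoundary (φ '' U)) ≤
      (K : ℝ≥0∞) ^ (n - 1) * μH[(n : ℝ) - 1] (essentialBoundary U) := by
  obtain ⟨hmeas, hvol, hbdry⟩ := hU
  have himage : MeasurableSet (φ '' U) :=
    hmeas.image_of_continuousOn_injOn hφ.continuous.continuousOn hφ'.injective.injOn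
  have hvol_le := volume_image_le_of_lipschitzWith hφ U
  have hbdry_le := hausdorffMeasure_essentialBoundary_image_le hφ hφ' hsurj hmeas
  have hK_lt (m : ℕ) : (K : ℝ≥0∞) ^ m < ⊤ := ENNReal.pow_lt_top ENNReal.coe_lt_top
  exact ⟨⟨himage, hvol_le.trans_lt (ENNReal.mul_lt_top (hK_lt _) hvol),
    hbdry_le.trans_lt (ENNReal.mul_lt_top (hK_lt _) hbdry)⟩, hvol_le, hbdry_le⟩

end

/-- **Configurations preserve bodies.**  The image of a set of finite perimeter under an
`L`-bi-Lipschitz bijection `φ : ℝⁿ → ℝⁿ` is a set of finite perimeter; moreover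
`Lⁿ(φ(U)) ≤ Lⁿ·Lⁿ(U)` and `H^{n−1}(∂*(φ(U))) ≤ L^{n−1}·H^{n−1}(∂*U)`. -/
theorem finitePerimeter_image_biLipschitz
    (n : ℕ) (L : ℝ) (hL : 0 < L)
    (φ : EuclideanSpace ℝ (Fin n) → EuclideanSpace ℝ (Fin n))
    (hbij : Function.Bijective φ)
    (hbl : ∀ x y : EuclideanSpace ℝ (Fin n),
      (1 / L) * ‖x - y‖ ≤ ‖φ x - φ y‖ ∧ ‖φ x - φ y‖ ≤ L * ‖x - y‖)
    (U : Set (EuclideanSpace ℝ (Fin n))) (hU : HasFinitePerimeter U) :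
    HasFinitePerimeter (φ '' U) ∧
    volume (φ '' U) ≤ ENNReal.ofReal (L ^ n) * volume U ∧
    μH[(n : ℝ) - 1] (essentialBoundary (φ '' U)) ≤
      ENNReal.ofReal (L ^ (n - 1)) * μH[(n : ℝ) - 1] (essentialBoundary U) := by
  lift L to ℝ≥0 using hL.le
  obtain ⟨hφ, hφ'⟩ := lipschitzWith_and_antilipschitzWith_of_norm_sub (NNReal.coe_pos.1 hL) hbl
  simpa only [ENNReal.ofReal_pow L.coe_nonneg, ENNReal.ofReal_coe_nnreal] using
    finitePerimeter_image_biLipschitz_general hφ hφ' hbij.2 hU
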